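/- arXiv:2506.18713 — 3 statements merged into one kernel-verified Lean document; each statement's English description precedes it below -/
import Mathlib

section
/- Let M ∈ K^{q×p} be full-rank with q ≤ p (i.e., M is invertible or surjective), so that MM⁺ = I_q. Then the tensor-tensor multiplication *_M is associative: for all A ∈ K^{m×n×p}, B ∈ K^{n×s×p} and C ∈ K^{s×r×p}, (A *_M B) *_M C = A *_M (B *_M C). -/
open Matrix

/-- Mode-3 product of a third-order tensor (stack of `p` frontal slices)
with a matrix `M ∈ K^{q×p}`: `(A ×₃ M)ₖ = Σ_l M k l • A l`. -/
def mode3 {K : Type*} [Semiring K] {m n p q : ℕ} (M : Matrix (Fin q) (Fin p) K)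
    (A : Fin p → Matrix (Fin m) (Fin n) K) : Fin q → Matrix (Fin m) (Fin n) K :=
  fun k => ∑ l, M k l • A l

/-- Face-wise product of two third-order tensors. -/
def facewise {K : Type*} [Semiring K] {m n s p : ℕ}
    (A : Fin p → Matrix (Fin m) (Fin n) K) (B : Fin p → Matrix (Fin n) (Fin s) K) :
    Fin p → Matrix (Fin m) (Fin s) K :=
  fun i => A i * B i

/-- Tensor-tensor multiplication `A *_M B = ((A ×₃ M) △ (B ×₃ M)) ×₃ M⁺`. -/
def tmul3 {K : Type*} [Semiring K] {m n s p q : ℕ} (M : Matrix (Fin q) (Fin p) K)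
    (Mp : Matrix (Fin p) (Fin q) K)
    (A : Fin p → Matrix (Fin m) (Fin n) K) (B : Fin p → Matrix (Fin n) (Fin s) K) :
    Fin p → Matrix (Fin m) (Fin s) K :=
  mode3 Mp (facewise (mode3 M A) (mode3 M B))

theorem mode3_mode3 {K : Type*} [Semiring K] {m n p q t : ℕ} (M : Matrix (Fin q) (Fin p) K)
    (N : Matrix (Fin p) (Fin t) K) (A : Fin t → Matrix (Fin m) (Fin n) K) :
    mode3 M (mode3 N A) = mode3 (M * N) A := by
  funext k
  simp only [mode3, Matrix.mul_apply, Finset.smul_sum, Finset.sum_smul, smul_smul]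
  exact Finset.sum_comm

theorem mode3_one {K : Type*} [Semiring K] {m n p : ℕ} (A : Fin p → Matrix (Fin m) (Fin n) K) :
    mode3 1 A = A := by
  funext k
  simp [mode3, Matrix.one_apply, ite_smul]

theorem facewise_assoc {K : Type*} [Semiring K] {m n s r p : ℕ}
    (A : Fin p → Matrix (Fin m) (Fin n) K) (B : Fin p → Matrix (Fin n) (Fin s) K)
    (C : Fin p → Matrix (Fin s) (Fin r) K) :
    facewise (facewise A B) C = facewise A (facewise B C) :=
  funext fun _ => Matrix.mul_assoc _ _ _

/-- for a full-rank `M ∈ K^{q×p}` with `q ≤ p` (invertible or surjective),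
so that `M M⁺ = I_q`, the tensor-tensor multiplication `*_M` is associative. -/
theorem tmul3_assoc {K : Type*} [RCLike K] {m n s r p q : ℕ} (hq : q ≤ p)
    (M : Matrix (Fin q) (Fin p) K) (hrank : M.rank = q)
    (Mp : Matrix (Fin p) (Fin q) K) (hMp : M * Mp = 1)
    (A : Fin p → Matrix (Fin m) (Fin n) K) (B : Fin p → Matrix (Fin n) (Fin s) K)
    (C : Fin p → Matrix (Fin s) (Fin r) K) :
    tmul3 M Mp (tmul3 M Mp A B) C = tmul3 M Mp A (tmul3 M Mp B C) := by
  simp only [tmul3, mode3_mode3, hMp, mode3_one, facewise_assoc]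
end

section
/- Let M ∈ K^{q×p} be full-rank with q > p (injective), and let n ≥ 1. A *_M-identity tensor in K^{n×n×p} exists if and only if the all-ones vector (1,1,…,1) ∈ K^q lies in the column space of M (equivalently, in the image of the map x ↦ Mx from K^p to K^q). -/
open Matrix

/-- for a full-rank injective `M ∈ K^{q×p}` (`q > p`) and `n ≥ 1`,
a `*_M`-identity tensor in `K^{n×n×p}` exists if and only if the all-ones vector of
`K^q` lies in the column space of `M`. -/
theorem identity_exists_iff_allOnes_mem_range {K : Type*} [RCLike K] {n p q : ℕ}
    (hq : p < q) (hn : 0 < n)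
    (M : Matrix (Fin q) (Fin p) K) (hrank : M.rank = p) :
    (∃ I : Fin p → Matrix (Fin n) (Fin n) K, ∀ i, mode3 M I i = 1) ↔
      (∃ x : Fin p → K, M.mulVec x = fun _ => 1) := by
  constructor
  · rintro ⟨I, hI⟩
    refine ⟨fun l => I l ⟨0, hn⟩ ⟨0, hn⟩, funext fun k => ?_⟩
    simpa [mode3, Matrix.sum_apply, mulVec, dotProduct] using
      congrFun₂ (hI k) ⟨0, hn⟩ ⟨0, hn⟩
  · rintro ⟨x, hx⟩
    refine ⟨fun l => x l • 1, fun k => ?_⟩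
    have hk : ∑ l, M k l * x l = 1 := congrFun hx k
    simp only [mode3, smul_smul, ← Finset.sum_smul, hk, one_smul]
end

section
/- Let M ∈ K^{q×p} be full-rank with q ≤ p (invertible or surjective). Then for every n, the tensor rank of the tensor-tensor multiplication satisfies R(TM_{⟨n⟩,p,q}) ≤ q · R(M_⟨n⟩). -/
open Matrix

/-- Tensor rank (bilinear complexity) of a bilinear map `T : U × V → W`. -/
noncomputable def tensorRank (K : Type*) [Field K] {U V W : Type*}
    [AddCommGroup U] [Module K U] [AddCommGroup V] [Module K V]
    [AddCommGroup W] [Module K W] (T : U → V → W) : ℕ :=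
  sInf {r : ℕ | ∃ (α : Fin r → U →ₗ[K] K) (β : Fin r → V →ₗ[K] K) (w : Fin r → W),
    ∀ u v, T u v = ∑ i, (α i u * β i v) • w i}

/-- A decomposition into rank-one terms over any finite index type gives one over `Fin`. -/
theorem exists_fin_rankOne_decomposition {K : Type*} [Field K] {U V W : Type*}
    [AddCommGroup U] [Module K U] [AddCommGroup V] [Module K V]
    [AddCommGroup W] [Module K W] {T : U → V → W} {ι : Type*} [Fintype ι]
    (α : ι → U →ₗ[K] K) (β : ι → V →ₗ[K] K) (w : ι → W)
    (h : ∀ u v, T u v = ∑ i, (α i u * β i v) • w i) :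
    ∃ (α : Fin (Fintype.card ι) → U →ₗ[K] K) (β : Fin (Fintype.card ι) → V →ₗ[K] K)
      (w : Fin (Fintype.card ι) → W), ∀ u v, T u v = ∑ i, (α i u * β i v) • w i := by
  let e := (Fintype.equivFin ι).symm
  refine ⟨α ∘ e, β ∘ e, w ∘ e, fun u v => ?_⟩
  rw [h]
  exact (e.sum_comp fun i => (α i u * β i v) • w i).symm

/-- Matrix multiplication attains its tensor rank. -/
theorem exists_rankOne_decomposition_matrix_mul (K : Type*) [Field K] (n : ℕ) :
    ∃ (α β : Fin (tensorRank K fun A B : Matrix (Fin n) (Fin n) K => A * B) →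
        Matrix (Fin n) (Fin n) K →ₗ[K] K)
      (w : Fin (tensorRank K fun A B : Matrix (Fin n) (Fin n) K => A * B) →
        Matrix (Fin n) (Fin n) K),
      ∀ A B : Matrix (Fin n) (Fin n) K, A * B = ∑ i, (α i A * β i B) • w i := by
  refine Nat.sInf_mem (s := {r : ℕ | ∃ (α β : Fin r → Matrix (Fin n) (Fin n) K →ₗ[K] K)
    (w : Fin r → Matrix (Fin n) (Fin n) K),
    ∀ A B : Matrix (Fin n) (Fin n) K, A * B = ∑ i, (α i A * β i B) • w i}) ⟨_,
    exists_fin_rankOne_decomposition (ι := Fin n × Fin n × Fin n)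
      (fun x => Matrix.entryLinearMap K K x.1 x.2.1)
      (fun x => Matrix.entryLinearMap K K x.2.1 x.2.2)
      (fun x => Matrix.single x.1 x.2.2 1) fun A B => ?_⟩
  conv_lhs => rw [Matrix.matrix_eq_sum_single (A * B)]
  simp only [Fintype.sum_prod_type, Matrix.entryLinearMap_apply, Matrix.smul_single,
    smul_eq_mul, mul_one]
  refine Finset.sum_congr rfl fun i _ => ?_
  rw [Finset.sum_comm]
  refine Finset.sum_congr rfl fun j _ => ?_
  rw [Matrix.mul_apply]
  exact map_sum (Matrix.singleAddMonoidHom i j) _ _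

/-- The `k`-th frontal slice of the mode-3 product, as a linear map. -/
def mode3Slice {K : Type*} [CommSemiring K] {m n p q : ℕ} (M : Matrix (Fin q) (Fin p) K)
    (k : Fin q) : (Fin p → Matrix (Fin m) (Fin n) K) →ₗ[K] Matrix (Fin m) (Fin n) K :=
  ∑ l, M k l • LinearMap.proj l

theorem mode3Slice_apply {K : Type*} [CommSemiring K] {m n p q : ℕ}
    (M : Matrix (Fin q) (Fin p) K) (k : Fin q) (A : Fin p → Matrix (Fin m) (Fin n) K) :
    mode3Slice M k A = mode3 M A k := by
  simp [mode3Slice, mode3, LinearMap.sum_apply]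

/-- for full-rank `M ∈ K^{q×p}` with `q ≤ p` (so `M M⁺ = I_q`),
`R(TM_{⟨n⟩,p,q}) ≤ q · R(M_⟨n⟩)`. -/
theorem tensorRank_tmul3_le {K : Type*} [RCLike K] {p q : ℕ} (hq : q ≤ p)
    (M : Matrix (Fin q) (Fin p) K) (hrank : M.rank = q)
    (Mp : Matrix (Fin p) (Fin q) K) (hMp : M * Mp = 1) (n : ℕ) :
    tensorRank K (fun A B : Fin p → Matrix (Fin n) (Fin n) K => tmul3 M Mp A B) ≤
      q * tensorRank K (fun A B : Matrix (Fin n) (Fin n) K => A * B) := by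
  obtain ⟨α, β, w, h⟩ := exists_rankOne_decomposition_matrix_mul K n
  refine Nat.sInf_le ?_
  have key := exists_fin_rankOne_decomposition
    (T := fun A B : Fin p → Matrix (Fin n) (Fin n) K => tmul3 M Mp A B)
    (fun x : Fin q × Fin (tensorRank K fun A B : Matrix (Fin n) (Fin n) K => A * B) =>
      α x.2 ∘ₗ mode3Slice M x.1)
    (fun x => β x.2 ∘ₗ mode3Slice M x.1)
    (fun x l => Mp l x.1 • w x.2) fun A B => ?_
  · rwa [Fintype.card_prod, Fintype.card_fin, Fintype.card_fin] at key
  · funext l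
    simp only [tmul3, LinearMap.comp_apply, mode3Slice_apply, Fintype.sum_prod_type,
      Finset.sum_apply, Pi.smul_apply]
    rw [mode3]
    refine Finset.sum_congr rfl fun k _ => ?_
    rw [facewise, h, Finset.smul_sum]
    exact Finset.sum_congr rfl fun i _ => smul_comm _ _ _
end
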